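/- Let K be a field whose characteristic does not divide the order of the finite abelian group H, let g_1,…,g_m ∈ H, and let H' = ⟨g_1,…,g_m⟩ be the subgroup they generate. Then for every 0 ≤ i ≤ m, the i-th cohomology of the Koszul complex Z(g_1−1,…,g_m−1) of K[H]-modules is isomorphic as a K[H]-module to a direct sum of binomial(m,i) copies of K[H/H'], and it vanishes for i < 0 and i > m. -/

import Mathlib

/-!
Let `A = K[H]`, let `π : A → K[H/H']` be the projection, and let `I` be the ideal generated by
the `a j = g j - 1`. Since `|H'|` is invertible in `K`, the averaging element
`ε = |H'|⁻¹ ∑_{h ∈ H'} h` exists; it satisfies `I * ε = 0`, `1 - ε ∈ I`, and `ker π ⊆ I`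
(`exists_averaging`).

The map sending a cocycle `z` to the family `(π (z T))_T` induces the isomorphism.

* It kills coboundaries, because `π (a j) = 0`.
* It is surjective: a family `y` lifts to a cochain `f` along `π`, and `ε f` is a cocycle
  (as `a j * ε = 0`) with `π (ε f) = y` (as `π ε = 1`).
* If `π z = 0` then all entries of `z` lie in `I`, so `ε z = 0` and `z = (1 - ε) z`. Contraction
  with the `j`-th basis vector is a homotopy between multiplication by `a j` and zero
  (`flatD_contract`), so each `a j`, hence all of `I`, hence `1 - ε`, kills the cohomology class
  of `z`; thus `z` is a coboundary.
-/

section KoszulModel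

variable (O : Type*) [CommRing O] (A : Type*) [CommRing A] [Algebra O A]

/-- Index set of the degree `i` part of the Koszul complex on `m` elements:
subsets of `{0,…,m-1}` of cardinality `i` (empty for `i < 0` or `i > m`). -/
abbrev KIdx (m : ℕ) (i : ℤ) : Type := {T : Finset (Fin m) // (T.card : ℤ) = i}

/-- Degree `i` term of the Koszul complex `Z(a_1) ⊗_A ⋯ ⊗_A Z(a_m)` on `m` elements of `A`,
realized as the free `A`-module on subsets of `{0,…,m-1}` of cardinality `i`
(the basis element indexed by `T` corresponding to the tensor of the degree `1` basis vectors
in the factors from `T` and the degree `0` basis vectors elsewhere). -/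
abbrev KT (m : ℕ) (i : ℤ) : Type _ := KIdx m i → A

/-- The Koszul differential from degree `i` to degree `i + 1` (as an `O`-linear map),
for the sequence `a : Fin m → A`:
`(d f) T = ∑_{j ∈ T} (-1)^{#{k ∈ T | k < j}} · (a j) · f (T \ {j})`.
This is the differential of the tensor product complex `Z(a_1) ⊗_A ⋯ ⊗_A Z(a_m)`
(with the standard Koszul signs). -/
noncomputable def kdAux (m : ℕ) (a : Fin m → A) (i : ℤ) :
    KT A m i →ₗ[O] KT A m (i + 1) where
  toFun f T := ∑ j ∈ T.1.attach,
      (-1 : A) ^ ((T.1.filter (fun k => k < j.1)).card) * a j.1 *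
        f ⟨T.1.erase j.1, by
          have h2 : ((T : Finset (Fin m)).card : ℤ) = i + 1 := T.2
          have h1 : 1 ≤ (T : Finset (Fin m)).card := Finset.card_pos.mpr ⟨j.1, j.2⟩
          rw [Finset.card_erase_of_mem j.2, Nat.cast_sub h1]
          omega⟩
  map_add' f g := by
    funext T
    simp only [Pi.add_apply, mul_add, Finset.sum_add_distrib]
  map_smul' c f := by
    funext T
    simp only [Pi.smul_apply, RingHom.id_apply, Finset.smul_sum]
    exact Finset.sum_congr rfl fun j _ => by rw [mul_smul_comm]

/-- The Koszul differential `KT i ⟶ KT j` (it is zero unless `j = i + 1`). -/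
noncomputable def kd (m : ℕ) (a : Fin m → A) (i j : ℤ) :
    KT A m i →ₗ[O] KT A m j :=
  if h : j = i + 1 then (by subst h; exact kdAux O A m a i) else 0

/-- The `i`-th cohomology of the Koszul complex: the kernel of the differential leaving
degree `i`, modulo the image of the differential entering degree `i`. -/
noncomputable abbrev koszulCohomology (m : ℕ) (a : Fin m → A) (i : ℤ) :=
  LinearMap.ker (kd O A m a i (i + 1)) ⧸
    Submodule.comap (LinearMap.ker (kd O A m a i (i + 1))).subtype
      (LinearMap.range (kd O A m a (i - 1) i))

end KoszulModel

/-! ### The Koszul differential on functions of all subsets -/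

section Flat

variable {A : Type*} [CommRing A] {m : ℕ}

/-- The Koszul sign `(-1)^{#{k ∈ T | k < j}}`. -/
def koszulSign (A : Type*) [CommRing A] {m : ℕ} (j : Fin m) (T : Finset (Fin m)) : A :=
  (-1 : A) ^ ((T.filter (fun k => k < j)).card)

/-- The Koszul differential on all degrees at once, for functions on all subsets of `Fin m`. -/
def flatD (a : Fin m → A) (F : Finset (Fin m) → A) (T : Finset (Fin m)) : A :=
  ∑ j ∈ T, koszulSign A j T * a j * F (T.erase j)

/-- Contraction with the `j`-th basis vector. -/
def contract (j : Fin m) (F : Finset (Fin m) → A) (T : Finset (Fin m)) : A :=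
  if j ∈ T then 0 else koszulSign A j T * F (insert j T)

/-- Extension by zero of a cochain of degree `i` to all subsets. -/
noncomputable def extendZero {i : ℤ} (f : KT A m i) (T : Finset (Fin m)) : A :=
  if h : (T.card : ℤ) = i then f ⟨T, h⟩ else 0

lemma koszulSign_mul_self (j : Fin m) (T : Finset (Fin m)) :
    koszulSign A j T * koszulSign A j T = 1 := by
  unfold koszulSign
  rw [← mul_pow]; simp

lemma koszulSign_erase_of_le {j k : Fin m} (h : j ≤ k) (T : Finset (Fin m)) :
    koszulSign A j (T.erase k) = koszulSign A j T := by
  unfold koszulSign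
  congr 2
  ext x
  simp only [Finset.mem_filter, Finset.mem_erase]
  constructor
  · rintro ⟨⟨_, h1⟩, h2⟩; exact ⟨h1, h2⟩
  · rintro ⟨h1, h2⟩; exact ⟨⟨(lt_of_lt_of_le h2 h).ne, h1⟩, h2⟩

lemma koszulSign_erase_of_lt {j k : Fin m} (h : k < j) {T : Finset (Fin m)} (hk : k ∈ T) :
    koszulSign A j T = - koszulSign A j (T.erase k) := by
  unfold koszulSign
  have h1 : T.filter (fun x => x < j) =
      insert k ((T.erase k).filter (fun x => x < j)) := by
    ext x
    simp only [Finset.mem_filter, Finset.mem_erase, Finset.mem_insert]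
    by_cases hx : x = k
    · subst hx; simp [h, hk]
    · simp [hx]
  rw [h1, Finset.card_insert_of_notMem (by simp), pow_succ]
  ring

/-- The sign identity that makes the off-diagonal terms of the homotopy formula cancel. -/
lemma koszulSign_cancel {j k : Fin m} {T : Finset (Fin m)} (hj : j ∉ T) (hk : k ∈ T) :
    koszulSign A k T * koszulSign A j (T.erase k) +
      koszulSign A j T * koszulSign A k (insert j T) = 0 := by
  have hjk : j ≠ k := fun h => hj (h ▸ hk)
  have he : (insert j T).erase j = T := Finset.erase_insert hj
  rcases lt_or_gt_of_ne hjk with h | h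
  · have h1 := koszulSign_erase_of_lt (A := A) h (Finset.mem_insert_self j T)
    rw [h1, he, koszulSign_erase_of_le h.le]
    ring
  · have h1 := koszulSign_erase_of_le (A := A) h.le (insert j T)
    rw [← h1, he, koszulSign_erase_of_lt h hk]
    ring

/-- The homotopy formula: multiplication by `a j` is null-homotopic on the Koszul complex. -/
lemma flatD_contract (a : Fin m → A) (j : Fin m) (F : Finset (Fin m) → A)
    (T : Finset (Fin m)) :
    flatD a (contract j F) T + contract j (flatD a F) T = a j * F T := by
  by_cases hj : j ∈ T
  · have h0 : contract j (flatD a F) T = 0 := by simp [contract, hj]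
    rw [h0, add_zero, flatD, Finset.sum_eq_single j]
    · have h1 : j ∉ T.erase j := by simp
      simp only [contract, h1, if_false]
      rw [Finset.insert_erase hj, koszulSign_erase_of_le le_rfl]
      linear_combination (a j * F T) * koszulSign_mul_self (A := A) j T
    · intro k _ hkj
      have : j ∈ T.erase k := Finset.mem_erase.2 ⟨hkj.symm, hj⟩
      simp [contract, this]
    · intro h; exact absurd hj h
  · have h2 : contract j (flatD a F) T = a j * F T +
        ∑ k ∈ T, koszulSign A j T *
          (koszulSign A k (insert j T) * a k * F ((insert j T).erase k)) := by
      simp only [contract, hj, if_false, flatD]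
      rw [Finset.sum_insert hj, mul_add, Finset.mul_sum, Finset.erase_insert hj]
      congr 1
      rw [← koszulSign_erase_of_le le_rfl (insert j T), Finset.erase_insert hj]
      linear_combination (a j * F T) * koszulSign_mul_self (A := A) j T
    rw [h2, flatD, add_left_comm, ← Finset.sum_add_distrib, Finset.sum_eq_zero, add_zero]
    intro k hk
    have hjk : j ≠ k := fun h => hj (h ▸ hk)
    have h3 : j ∉ T.erase k := fun h => hj (Finset.mem_of_mem_erase h)
    simp only [contract, h3, if_false]
    rw [Finset.erase_insert_of_ne hjk]
    linear_combination (a k * F (insert j (T.erase k))) *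
      koszulSign_cancel (A := A) hj hk

variable (O : Type*) [CommRing O] [Algebra O A]

lemma kd_apply (a : Fin m → A) {i j : ℤ} (h : j = i + 1) (f : KT A m i) (T : KIdx m j) :
    kd O A m a i j f T = flatD a (extendZero f) T.1 := by
  subst h
  have : kd O A m a i (i + 1) = kdAux O A m a i := by simp [kd]
  rw [this, flatD, ← Finset.sum_attach]
  refine Finset.sum_congr rfl fun j _ => ?_
  have hc : (((T.1.erase j.1).card : ℕ) : ℤ) = i := by
    have h2 : ((T : Finset (Fin m)).card : ℤ) = i + 1 := T.2
    have h1 : 1 ≤ (T : Finset (Fin m)).card := Finset.card_pos.mpr ⟨j.1, j.2⟩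
    rw [Finset.card_erase_of_mem j.2, Nat.cast_sub h1]
    omega
  rw [extendZero, dif_pos hc]
  rfl

lemma kd_mul (a : Fin m → A) {i j : ℤ} (h : j = i + 1) (c : A) (f : KT A m i) :
    kd O A m a i j (fun T => c * f T) = fun T => c * kd O A m a i j f T := by
  funext T
  rw [kd_apply O a h, kd_apply O a h, flatD, flatD, Finset.mul_sum]
  refine Finset.sum_congr rfl fun j _ => ?_
  unfold extendZero
  split_ifs <;> ring

/-- Multiplying a cocycle by `a j` gives a coboundary. -/
lemma mul_cocycle_mem_range (a : Fin m → A) {i : ℤ} (z : KT A m i)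
    (hz : kd O A m a i (i + 1) z = 0) (j : Fin m) :
    (fun T => a j * z T) ∈ LinearMap.range (kd O A m a (i - 1) i) := by
  refine ⟨fun S => contract j (extendZero z) S.1, ?_⟩
  funext T
  rw [kd_apply O a (by ring)]
  have key := flatD_contract a j (extendZero z) T.1
  have h1 : contract j (flatD a (extendZero z)) T.1 = 0 := by
    unfold contract
    split_ifs with hj
    · rfl
    · have hc : (((insert j T.1).card : ℕ) : ℤ) = i + 1 := by
        rw [Finset.card_insert_of_notMem hj]; push_cast; rw [T.2]
      have := kd_apply O a rfl z ⟨insert j T.1, hc⟩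
      rw [← this, hz]; simp
  have h2 : extendZero z T.1 = z T := by simp [extendZero, T.2]
  rw [h1, add_zero, h2] at key
  rw [← key]
  refine Finset.sum_congr rfl fun k hk => ?_
  have hc : (((T.1.erase k).card : ℕ) : ℤ) = i - 1 := by
    have h1 : 1 ≤ T.1.card := Finset.card_pos.mpr ⟨k, hk⟩
    have h2 := T.2
    rw [Finset.card_erase_of_mem hk, Nat.cast_sub h1]
    omega
  simp [extendZero, hc]

/-- The ideal generated by the `a j` annihilates the cohomology. -/
lemma ideal_mul_cocycle_mem_range (a : Fin m → A) {i : ℤ} (z : KT A m i)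
    (hz : kd O A m a i (i + 1) z = 0) {x : A} (hx : x ∈ Ideal.span (Set.range a)) :
    (fun T => x * z T) ∈ LinearMap.range (kd O A m a (i - 1) i) := by
  induction hx using Submodule.span_induction with
  | mem x h =>
    obtain ⟨j, rfl⟩ := h
    exact mul_cocycle_mem_range O a z hz j
  | zero =>
    refine ⟨0, ?_⟩
    rw [map_zero]
    funext T
    simp
  | add x y _ _ hx hy =>
    have := Submodule.add_mem _ hx hy
    convert this using 1
    funext T
    simp [add_mul]
  | smul c x _ hx =>
    obtain ⟨w, hw⟩ := hx
    refine ⟨fun T => c * w T, ?_⟩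
    rw [kd_mul O a (by ring), hw]
    funext T
    simp [mul_assoc]

end Flat

/-! ### The averaging element of the subgroup -/

section Averaging

variable {K : Type*} [Field K] {H : Type*} [CommGroup H]

/-- The projection `K[H] → K[H/H']`. -/
noncomputable def groupAlgProj (K : Type*) [Field K] {H : Type*} [CommGroup H]
    (H' : Subgroup H) :
    MonoidAlgebra K H →ₐ[K] MonoidAlgebra K (H ⧸ H') :=
  MonoidAlgebra.lift K _ H ((MonoidAlgebra.of K (H ⧸ H')).comp (QuotientGroup.mk' H'))

lemma groupAlgProj_of (H' : Subgroup H) (h : H) :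
    groupAlgProj K H' (MonoidAlgebra.of K H h) =
      MonoidAlgebra.of K (H ⧸ H') (QuotientGroup.mk h) := by
  rw [groupAlgProj, MonoidAlgebra.lift_of]; rfl

lemma groupAlgProj_surjective (H' : Subgroup H) :
    Function.Surjective (groupAlgProj K H') := by
  intro y
  induction y using MonoidAlgebra.induction_on with
  | of q =>
    obtain ⟨h, rfl⟩ := QuotientGroup.mk_surjective q
    exact ⟨_, groupAlgProj_of H' h⟩
  | add x y hx hy =>
    obtain ⟨u, rfl⟩ := hx
    obtain ⟨v, rfl⟩ := hy
    exact ⟨u + v, map_add _ _ _⟩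
  | smul c x hx =>
    obtain ⟨u, rfl⟩ := hx
    exact ⟨c • u, map_smul _ _ _⟩

lemma of_sub_one_mem {ι : Type*} (g : ι → H) {h : H}
    (hh : h ∈ Subgroup.closure (Set.range g)) :
    MonoidAlgebra.of K H h - 1 ∈
      Ideal.span (Set.range fun j => MonoidAlgebra.of K H (g j) - 1) := by
  induction hh using Subgroup.closure_induction with
  | mem x hx =>
    obtain ⟨j, rfl⟩ := hx
    exact Ideal.subset_span ⟨j, rfl⟩
  | one => rw [map_one, sub_self]; exact Submodule.zero_mem _
  | mul x y _ _ hx hy =>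
    have : MonoidAlgebra.of K H (x * y) - 1 =
        MonoidAlgebra.of K H x * (MonoidAlgebra.of K H y - 1) +
          (MonoidAlgebra.of K H x - 1) := by
      rw [map_mul]; ring
    rw [this]
    exact Ideal.add_mem _ (Ideal.mul_mem_left _ _ hy) hx
  | inv x _ hx =>
    have h1 : MonoidAlgebra.of K H x⁻¹ * MonoidAlgebra.of K H x = 1 := by
      rw [← map_mul, inv_mul_cancel, map_one]
    have : MonoidAlgebra.of K H x⁻¹ - 1 =
        (-MonoidAlgebra.of K H x⁻¹) * (MonoidAlgebra.of K H x - 1) := by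
      linear_combination h1
    rw [this]
    exact Ideal.mul_mem_left _ _ hx

/-- The kernel of `K[H] → K[H/H']` lies in every ideal containing all `h - 1` with `h ∈ H'`:
an element of `K[H]` is congruent, modulo such an ideal, to the element obtained by replacing
each group element by the chosen representative of its coset. -/
lemma mem_of_groupAlgProj_eq_zero (H' : Subgroup H) (I : Ideal (MonoidAlgebra K H))
    (hI : ∀ h ∈ H', MonoidAlgebra.of K H h - 1 ∈ I) {x : MonoidAlgebra K H}
    (hx : groupAlgProj K H' x = 0) : x ∈ I := by
  let σ : MonoidAlgebra K (H ⧸ H') →ₗ[K] MonoidAlgebra K H :=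
    (MonoidAlgebra.basis (H ⧸ H') K).constr K (fun q => MonoidAlgebra.of K H q.out)
  have hσ : ∀ q, σ (MonoidAlgebra.of K _ q) = MonoidAlgebra.of K H q.out := by
    intro q
    have := (MonoidAlgebra.basis (H ⧸ H') K).constr_basis K
      (fun q => MonoidAlgebra.of K H q.out) q
    rwa [MonoidAlgebra.basis_apply] at this
  have key : ∀ x, x - σ (groupAlgProj K H' x) ∈ I := by
    intro x
    induction x using MonoidAlgebra.induction_on with
    | of h =>
      rw [groupAlgProj_of, hσ]
      set r : H := (QuotientGroup.mk h : H ⧸ H').out with hr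
      have hm : r⁻¹ * h ∈ H' := by
        rw [← QuotientGroup.eq, hr]
        exact Quotient.out_eq' _
      have : MonoidAlgebra.of K H h - MonoidAlgebra.of K H r =
          MonoidAlgebra.of K H r * (MonoidAlgebra.of K H (r⁻¹ * h) - 1) := by
        rw [mul_sub, ← map_mul, mul_inv_cancel_left, mul_one]
      rw [this]
      exact Ideal.mul_mem_left _ _ (hI _ hm)
    | add x y hx hy =>
      have := Ideal.add_mem _ hx hy
      rw [map_add, map_add]
      convert this using 1
      ring
    | smul c x hx =>
      rw [map_smul, map_smul, ← smul_sub, Algebra.smul_def]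
      exact Ideal.mul_mem_left _ _ hx
  simpa [hx] using key x

/-- The averaging element `ε = |H'|⁻¹ ∑_{h ∈ H'} h` and the properties of it that are used. -/
lemma exists_averaging [Fintype H] (hK : (Fintype.card H : K) ≠ 0) {ι : Type*} (g : ι → H)
    (H' : Subgroup H) (hH' : H' = Subgroup.closure (Set.range g)) :
    ∃ ε : MonoidAlgebra K H,
      1 - ε ∈ Ideal.span (Set.range fun j => MonoidAlgebra.of K H (g j) - 1) ∧
      (∀ j, (MonoidAlgebra.of K H (g j) - 1) * ε = 0) ∧
      groupAlgProj K H' ε = 1 ∧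
      (∀ x, groupAlgProj K H' x = 0 → ε * x = 0) := by
  classical
  set I := Ideal.span (Set.range fun j => MonoidAlgebra.of K H (g j) - 1) with hIdef
  have hI : ∀ h ∈ H', MonoidAlgebra.of K H h - 1 ∈ I := fun h hh =>
    of_sub_one_mem g (hH' ▸ hh)
  have hn : (Fintype.card H' : K) ≠ 0 := by
    intro h0
    obtain ⟨c, hc⟩ : Fintype.card H' ∣ Fintype.card H := by
      have := Subgroup.card_subgroup_dvd_card H'
      rwa [Nat.card_eq_fintype_card, Nat.card_eq_fintype_card] at this
    apply hK
    rw [hc, Nat.cast_mul, h0, zero_mul]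
  set n : K := (Fintype.card H' : K) with hndef
  have hone : (1 : MonoidAlgebra K H) = n⁻¹ • ∑ _h : H', (1 : MonoidAlgebra K H) := by
    rw [Finset.sum_const, Finset.card_univ, ← Nat.cast_smul_eq_nsmul K, smul_smul,
      inv_mul_cancel₀ hn, one_smul]
  have h1 : 1 - n⁻¹ • ∑ h : H', MonoidAlgebra.of K H (h : H) ∈ I := by
    have : 1 - n⁻¹ • ∑ h : H', MonoidAlgebra.of K H (h : H) =
        n⁻¹ • ∑ h : H', (-1) * (MonoidAlgebra.of K H (h : H) - 1) := by
      conv_lhs => rw [hone]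
      rw [← smul_sub, ← Finset.sum_sub_distrib]
      congr 1
      exact Finset.sum_congr rfl fun h _ => by ring
    rw [this, Algebra.smul_def]
    exact Ideal.mul_mem_left _ _ (Ideal.sum_mem _ fun h _ =>
      Ideal.mul_mem_left _ _ (hI _ h.2))
  have h2 : ∀ j, (MonoidAlgebra.of K H (g j) - 1) *
      (n⁻¹ • ∑ h : H', MonoidAlgebra.of K H (h : H)) = 0 := by
    intro j
    have hgj : g j ∈ H' := hH' ▸ Subgroup.subset_closure ⟨j, rfl⟩
    rw [mul_smul_comm, sub_mul, one_mul, Finset.mul_sum]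
    have : ∑ h : H', MonoidAlgebra.of K H (g j) * MonoidAlgebra.of K H (h : H) =
        ∑ h : H', MonoidAlgebra.of K H (h : H) := by
      refine Fintype.sum_equiv (Equiv.mulLeft (⟨g j, hgj⟩ : H')) _ _ fun h => ?_
      rw [← map_mul]; rfl
    rw [this, sub_self, smul_zero]
  refine ⟨_, h1, h2, ?_, fun x hx => ?_⟩
  · have h3 : ∀ h : H', groupAlgProj K H' (MonoidAlgebra.of K H (h : H)) = 1 := by
      intro h
      rw [groupAlgProj_of, (QuotientGroup.eq_one_iff _).2 h.2, map_one]
    have h4 := congrArg (groupAlgProj K H') hone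
    rw [map_smul, map_sum] at h4 ⊢
    simp only [h3]
    simpa using h4.symm
  · have hxI : x ∈ I := mem_of_groupAlgProj_eq_zero H' I hI hx
    clear hx
    induction hxI using Submodule.span_induction with
    | mem x h =>
      obtain ⟨j, rfl⟩ := h
      rw [mul_comm]
      exact h2 j
    | zero => rw [mul_zero]
    | add x y _ _ hx hy => rw [mul_add, hx, hy, add_zero]
    | smul c x _ hx => rw [smul_eq_mul, mul_left_comm, hx, mul_zero]

end Averaging

/-! ### The cohomology -/

/-- Let `K` be a field whose characteristic does not divide the order of the
finite abelian group `H`, let `g 1, …, g m ∈ H`, and let `H' = ⟨g 1, …, g m⟩` be the subgroup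
they generate. Then for every `0 ≤ i ≤ m`, the `i`-th cohomology of the Koszul complex
`Z(g 1 - 1, …, g m - 1)` of `K[H]`-modules is isomorphic, as a `K[H]`-module, to a direct sum
of `binomial (m, i)` copies of `K[H/H']` (where `K[H/H']` is a `K[H]`-module via the projection
`H → H/H'`; the `K[H]`-linearity of the `K`-linear isomorphism is expressed by equivariance for
multiplication by group elements `h ∈ H`), and the cohomology vanishes for `i < 0` and
for `i > m`. -/
theorem stmt5 (K : Type*) [Field K] (H : Type*) [CommGroup H] [Fintype H]
    (hK : (Fintype.card H : K) ≠ 0) (m : ℕ) (g : Fin m → H)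
    (H' : Subgroup H) (hH' : H' = Subgroup.closure (Set.range g))
    (a : Fin m → MonoidAlgebra K H) (ha : ∀ j, a j = MonoidAlgebra.of K H (g j) - 1) :
    (∀ i : ℤ, 0 ≤ i → i ≤ (m : ℤ) →
      ∃ e : koszulCohomology K (MonoidAlgebra K H) m a i ≃ₗ[K]
          (Fin (Nat.choose m i.toNat) → MonoidAlgebra K (H ⧸ H')),
        ∀ (h : H) (z z' : LinearMap.ker (kd K (MonoidAlgebra K H) m a i (i + 1))),
          ((z' : KT (MonoidAlgebra K H) m i) =
              fun T => MonoidAlgebra.of K H h * (z : KT (MonoidAlgebra K H) m i) T) →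
            e (Submodule.Quotient.mk z') =
              fun t => MonoidAlgebra.of K (H ⧸ H') (QuotientGroup.mk h) *
                e (Submodule.Quotient.mk z) t) ∧
    (∀ i : ℤ, i < 0 ∨ (m : ℤ) < i →
      Subsingleton (koszulCohomology K (MonoidAlgebra K H) m a i)) := by
  refine ⟨fun i hi0 him => ?_, fun i hi => ?_⟩
  · obtain rfl : a = fun j => MonoidAlgebra.of K H (g j) - 1 := funext ha
    obtain ⟨ε, hε1, hε2, hε3, hε4⟩ := exists_averaging hK g H' hH'
    set a : Fin m → MonoidAlgebra K H := fun j => MonoidAlgebra.of K H (g j) - 1 with ha'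
    have hπa : ∀ j, groupAlgProj K H' (a j) = 0 := by
      intro j
      have hgj : g j ∈ H' := hH' ▸ Subgroup.subset_closure ⟨j, rfl⟩
      rw [ha', map_sub, groupAlgProj_of, (QuotientGroup.eq_one_iff _).2 hgj, map_one, map_one,
        sub_self]
    have hcard : Fintype.card (KIdx m i) = Nat.choose m i.toNat := by
      have h1 : Fintype.card (KIdx m i) =
          Fintype.card {T : Finset (Fin m) // T.card = i.toNat} :=
        Fintype.card_congr (Equiv.subtypeEquivRight fun T => by omega)
      rw [h1, Fintype.card_finset_len, Fintype.card_fin]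
    let φ : Fin (Nat.choose m i.toNat) ≃ KIdx m i := (Fintype.equivFinOfCardEq hcard).symm
    let Φ : LinearMap.ker (kd K (MonoidAlgebra K H) m a i (i + 1)) →ₗ[K]
        (Fin (Nat.choose m i.toNat) → MonoidAlgebra K (H ⧸ H')) :=
      LinearMap.pi fun t => (groupAlgProj K H').toLinearMap ∘ₗ
        LinearMap.proj (φ t) ∘ₗ Submodule.subtype _
    have hΦ : ∀ z t, Φ z t = groupAlgProj K H' (z.1 (φ t)) := fun _ _ => rfl
    have hsurj : Function.Surjective Φ := by
      intro y
      choose f hf using fun T : KIdx m i => groupAlgProj_surjective (K := K) H' (y (φ.symm T))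
      refine ⟨⟨fun T => ε * f T, ?_⟩, ?_⟩
      · rw [LinearMap.mem_ker]
        funext T
        rw [kd_apply K a rfl]
        refine Finset.sum_eq_zero fun j _ => ?_
        unfold extendZero
        split_ifs with h
        · linear_combination (koszulSign (MonoidAlgebra K H) j T.1 *
            f ⟨T.1.erase j, h⟩) * hε2 j
        · rw [mul_zero]
      · funext t
        rw [hΦ, map_mul, hε3, one_mul, hf, Equiv.symm_apply_apply]
    have hker : Submodule.comap
        (LinearMap.ker (kd K (MonoidAlgebra K H) m a i (i + 1))).subtype
        (LinearMap.range (kd K (MonoidAlgebra K H) m a (i - 1) i)) = LinearMap.ker Φ := by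
      ext z
      rw [Submodule.mem_comap, LinearMap.mem_ker]
      constructor
      · rintro ⟨w, hw⟩
        funext t
        rw [hΦ, ← Submodule.subtype_apply, ← hw, kd_apply K a (by ring), flatD, map_sum]
        refine Finset.sum_eq_zero fun j _ => ?_
        rw [map_mul, map_mul, hπa, mul_zero, zero_mul]
      · intro hz
        have hz0 : ∀ T, ε * z.1 T = 0 := by
          intro T
          apply hε4
          have := congrFun hz (φ.symm T)
          rwa [hΦ, Equiv.apply_symm_apply] at this
        have := ideal_mul_cocycle_mem_range K a z.1 z.2 hε1
        convert this using 1
        funext T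
        rw [sub_mul, one_mul, hz0, sub_zero]
        rfl
    refine ⟨(Submodule.quotEquivOfEq _ _ hker).trans (Φ.quotKerEquivOfSurjective hsurj), ?_⟩
    intro h z z' hzz
    have he : ∀ z, ((Submodule.quotEquivOfEq _ _ hker).trans
        (Φ.quotKerEquivOfSurjective hsurj)) (Submodule.Quotient.mk z) = Φ z := fun _ => rfl
    rw [he, he]
    funext t
    rw [hΦ, hΦ, hzz, map_mul, groupAlgProj_of]
  · have : IsEmpty (KIdx m i) := by
      refine ⟨fun T => ?_⟩
      have h1 := T.2
      have h2 : T.1.card ≤ m := by simpa using Finset.card_le_univ T.1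
      omega
    have : Subsingleton (LinearMap.ker (kd K (MonoidAlgebra K H) m a i (i + 1))) :=
      inferInstance
    exact (Submodule.Quotient.mk_surjective _).subsingleton
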